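/- Under the Hypothesis and assuming a 1-MCM solution exists (so P(G, 𝒰) is full-dimensional), for every v ∈ V the inequality Σ_{i∈M} x_v^i ≤ 1 defines a facet of P(G, 𝒰). -/

import Mathlib

open Finset
open scoped Classical

noncomputable section

/-- The neighbourhood `N_G(U') ⊆ V` of a set `U' ⊆ U` in the bipartite graph with
adjacency relation `E`. -/
def neigh {U V : Type*} [Fintype V] (E : U → V → Prop) (U' : Finset U) : Finset V :=
  Finset.filter (fun v : V => ∃ u ∈ U', E u v) Finset.univ

/-- The bipartite graph `G[Ui ∪ Vi]` is `k`-CM on `Ui`: for every `V'' ⊆ Vi` with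
`|V''| = |Vi| - k`, the induced subgraph has a matching covering `Ui`. -/
def kCMon {U V : Type*} [Fintype V] (E : U → V → Prop) (Ui : Finset U) (Vi : Finset V)
    (k : ℕ) : Prop :=
  ∀ V'' ⊆ Vi, V''.card + k = Vi.card →
    ∃ f : {u // u ∈ Ui} → V, Function.Injective f ∧ ∀ u, E u.1 (f u) ∧ f u ∈ V''

/-- `𝒱` is a partition of `V` into `m` (possibly empty) parts. -/
def IsPartitionOn {V : Type*} {m : ℕ} (𝒱 : Fin m → Finset V) : Prop :=
  (∀ v : V, ∃ i, v ∈ 𝒱 i) ∧ ∀ i j, i ≠ j → Disjoint (𝒱 i) (𝒱 j)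

/-- `(G, 𝒰, 𝒱)` is `k`-MCM: for every `i`, the graph `H_i = G[U_i ∪ V_i]` is `k`-CM
on `U_i`. -/
def MCM {U V : Type*} [Fintype V] {m : ℕ} (E : U → V → Prop) (𝒰 : Fin m → Finset U)
    (𝒱 : Fin m → Finset V) (k : ℕ) : Prop :=
  ∀ i, kCMon E (𝒰 i) (𝒱 i) k

/-- The set of integer points of the MBCMBP polytope `P(G,𝒰)`. -/
def mbSet {U V : Type*} [Fintype V] {m : ℕ} (E : U → V → Prop) (𝒰 : Fin m → Finset U) :
    Set ((V × Fin m → ℝ) × ℝ) :=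
  {p | (∀ q : V × Fin m, p.1 q = 0 ∨ p.1 q = 1) ∧ (∃ z : ℕ, p.2 = (z : ℝ)) ∧
    (∀ v : V, ∑ i : Fin m, p.1 (v, i) ≤ 1) ∧
    ∀ i : Fin m, ∀ U' ⊆ 𝒰 i, U'.Nonempty →
      (U'.card : ℝ) + p.2 ≤ ∑ v ∈ neigh E U', p.1 (v, i)}

/-!
An integer point of `P(G, 𝒰)` either assigns `v` to exactly one class or leaves `v` unassigned. Fix
a class `i` and let `e` be the unit vector of the coordinate `(v, i)`. Adding `e` takes every point
of the second kind to one of the first, and points of the second kind exist, because some complete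
matching avoids `v`. Hence the direction space of `P(G, 𝒰)` is spanned by that of the face together
with `e`. The form `Σ_i x_v^i` vanishes on the direction of the face but not at `e`, so the two
dimensions differ by exactly one.
-/

theorem vectorSpan_le_ker_of_forall_eq {k E F : Type*} [Ring k] [AddCommGroup E] [Module k E]
    [AddCommGroup F] [Module k F] {L : E →ₗ[k] F} {a : F} {t : Set E} (ht : ∀ p ∈ t, L p = a) :
    vectorSpan k t ≤ LinearMap.ker L := by
  rw [vectorSpan_def, Submodule.span_le]
  rintro _ ⟨p, hp, q, hq, rfl⟩
  simp [ht p hp, ht q hq]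

theorem vectorSpan_eq_vectorSpan_sup {k E P : Type*} [Ring k] [AddCommGroup E] [Module k E]
    [AddTorsor E P] {s t : Set P} {W : Submodule k E} (hts : t ⊆ affineSpan k s)
    (hW : W ≤ vectorSpan k s) (hst : ∀ p ∈ s, ∃ q ∈ t, p -ᵥ q ∈ W) :
    vectorSpan k s = vectorSpan k t ⊔ W := by
  apply le_antisymm
  · rw [vectorSpan_def, Submodule.span_le]
    rintro _ ⟨p, hp, q, hq, rfl⟩
    obtain ⟨p', hp', hpp'⟩ := hst p hp
    obtain ⟨q', hq', hqq'⟩ := hst q hq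
    have hsplit : p -ᵥ q = (p' -ᵥ q') + ((p -ᵥ p') - (q -ᵥ q')) := by
      rw [← vsub_add_vsub_cancel p p' q, ← vsub_sub_vsub_cancel_right p' q q']
      abel
    change p -ᵥ q ∈ vectorSpan k t ⊔ W
    rw [hsplit]
    exact Submodule.add_mem_sup (vsub_mem_vectorSpan k hp' hq') (W.sub_mem hpp' hqq')
  · refine sup_le ?_ hW
    rw [← direction_affineSpan, ← direction_affineSpan]
    exact AffineSubspace.direction_le (affineSpan_le.2 hts)

theorem le_of_mem_convexHull {𝕜 E F : Type*} [Semiring 𝕜] [PartialOrder 𝕜] [AddCommMonoid E]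
    [Module 𝕜 E] [AddCommMonoid F] [PartialOrder F] [IsOrderedAddMonoid F] [Module 𝕜 F]
    [PosSMulMono 𝕜 F] {L : E →ₗ[𝕜] F} {a : F} {s : Set E} (hs : ∀ p ∈ s, L p ≤ a)
    {p : E} (hp : p ∈ convexHull 𝕜 s) : L p ≤ a :=
  convexHull_min hs (convex_halfSpace_le L.isLinear a) hp

theorem finrank_direction_face_add_one_of_add_mem {𝕜 E F : Type*} [Field 𝕜] [PartialOrder 𝕜]
    [AddCommGroup E] [Module 𝕜 E] [FiniteDimensional 𝕜 E] [AddCommGroup F] [Module 𝕜 F]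
    {L : E →ₗ[𝕜] F} {a : F} {s : Set E} {e : E}
    (hadd : ∀ p ∈ s, L p ≠ a → p + e ∈ s ∧ L (p + e) = a)
    (hne : ∃ p ∈ s, L p ≠ a) :
    Module.finrank 𝕜 (affineSpan 𝕜 {p ∈ convexHull 𝕜 s | L p = a}).direction + 1 =
      Module.finrank 𝕜 (affineSpan 𝕜 (convexHull 𝕜 s)).direction := by
  rw [affineSpan_convexHull, direction_affineSpan, direction_affineSpan]
  set T : Set E := {p ∈ convexHull 𝕜 s | L p = a}
  obtain ⟨p₀, hp₀, hLp₀⟩ := hne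
  obtain ⟨hp₀e, hLp₀e⟩ := hadd p₀ hp₀ hLp₀
  have he_mem : e ∈ vectorSpan 𝕜 s := by
    simpa using vsub_mem_vectorSpan 𝕜 hp₀e hp₀
  have he_notMem : e ∉ vectorSpan 𝕜 T := by
    intro he
    have hLe : L e = 0 := vectorSpan_le_ker_of_forall_eq (fun p hp => hp.2) he
    exact hLp₀ (by simpa [hLe] using hLp₀e)
  have hproj : ∀ p ∈ s, ∃ q ∈ T, p -ᵥ q ∈ Submodule.span 𝕜 {e} := by
    intro p hp
    by_cases hLp : L p = a
    · exact ⟨p, ⟨subset_convexHull 𝕜 s hp, hLp⟩, by simp⟩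
    · obtain ⟨hpe, hLpe⟩ := hadd p hp hLp
      exact ⟨p + e, ⟨subset_convexHull 𝕜 s hpe, hLpe⟩, by simp⟩
  have hTs : T ⊆ affineSpan 𝕜 s := fun p hp => convexHull_subset_affineSpan s hp.1
  rw [vectorSpan_eq_vectorSpan_sup hTs ((Submodule.span_singleton_le_iff_mem _ _).2 he_mem) hproj,
    Submodule.finrank_sup_span_singleton he_notMem]

theorem eq_zero_of_sum_ne_one {ι R : Type*} [Fintype ι] [Semiring R] [PartialOrder R]
    [IsOrderedRing R] {x : ι → R} (h01 : ∀ i, x i = 0 ∨ x i = 1) (hle : ∑ i, x i ≤ 1)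
    (hne : ∑ i, x i ≠ 1) (i : ι) : x i = 0 := by
  refine (h01 i).resolve_right fun hi => hne (hle.antisymm ?_)
  have hnonneg : ∀ j, 0 ≤ x j := fun j => by rcases h01 j with h | h <;> simp [h]
  exact hi ▸ Finset.single_le_sum (fun j _ => hnonneg j) (Finset.mem_univ i)

section MBSet

variable {U V : Type*} {m : ℕ}

/-- The left-hand side `Σ_{i∈M} x_v^i` of the inequality, as a linear form on the ambient space of
`P(G, 𝒰)`. -/
def assignmentSum (v : V) : ((V × Fin m → ℝ) × ℝ) →ₗ[ℝ] ℝ where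
  toFun p := ∑ i, p.1 (v, i)
  map_add' p q := by simp [Finset.sum_add_distrib]
  map_smul' c p := by simp [Finset.mul_sum]

theorem assignmentSum_apply (v : V) (p : (V × Fin m → ℝ) × ℝ) :
    assignmentSum v p = ∑ i, p.1 (v, i) := rfl

/-- The unit vector of the coordinate `x_v^i`; adding it to a point in which `v` is unassigned
assigns `v` to class `i`. -/
def assignmentVec (v : V) (i : Fin m) : (V × Fin m → ℝ) × ℝ :=
  (Pi.single (v, i) 1, 0)

theorem assignmentSum_assignmentVec (v : V) (i : Fin m) :
    assignmentSum v (assignmentVec v i) = 1 := by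
  simp [assignmentSum_apply, assignmentVec, Pi.single_apply]

/-- The point `(x, 0)` given by a map `f : U → V`, where `x` assigns to class `i` the vertices of
`f(U_i)`. -/
def matchingPoint (𝒰 : Fin m → Finset U) (f : U → V) : (V × Fin m → ℝ) × ℝ :=
  (fun q => if q.1 ∈ (𝒰 q.2).image f then 1 else 0, 0)

theorem assignmentSum_matchingPoint_of_forall_ne (𝒰 : Fin m → Finset U) {f : U → V} {v : V}
    (hv : ∀ u, f u ≠ v) :
    assignmentSum v (matchingPoint 𝒰 f) = 0 := by
  simp [assignmentSum_apply, matchingPoint, hv]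

variable [Fintype V] {E : U → V → Prop} {𝒰 : Fin m → Finset U}

theorem add_assignmentVec_mem_mbSet {p : (V × Fin m → ℝ) × ℝ} (hp : p ∈ mbSet E 𝒰) {v : V}
    (hv : ∀ j, p.1 (v, j) = 0) (i : Fin m) : p + assignmentVec v i ∈ mbSet E 𝒰 := by
  obtain ⟨h01, ⟨z, hz⟩, hsum, hHall⟩ := hp
  refine ⟨?_, ⟨z, by simp [assignmentVec, hz]⟩, ?_, ?_⟩
  · intro q
    by_cases hq : q = (v, i)
    · exact .inr (by simp [assignmentVec, hq, hv])
    · simpa [assignmentVec, hq] using h01 q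
  · intro w
    by_cases hw : w = v
    · simp [assignmentVec, Pi.single_apply, hw, hv]
    · simpa [assignmentVec, Pi.single_apply, hw] using hsum w
  · intro j U' hU' hne
    have hincr : p.1 ≤ (p + assignmentVec v i).1 :=
      le_add_of_nonneg_right (Pi.single_nonneg.2 zero_le_one)
    calc (U'.card : ℝ) + (p + assignmentVec v i).2 = U'.card + p.2 := by simp [assignmentVec]
      _ ≤ ∑ w ∈ neigh E U', p.1 (w, j) := hHall j U' hU' hne
      _ ≤ ∑ w ∈ neigh E U', (p + assignmentVec v i).1 (w, j) :=
        Finset.sum_le_sum fun w _ => hincr (w, j)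

theorem image_subset_neigh {f : U → V} (hE : ∀ u, E u (f u)) (U' : Finset U) :
    U'.image f ⊆ neigh E U' := by
  intro w hw
  obtain ⟨u, hu, rfl⟩ := Finset.mem_image.1 hw
  exact Finset.mem_filter.2 ⟨Finset.mem_univ _, u, hu, hE u⟩

theorem matchingPoint_mem_mbSet (hdisj : ∀ i j, i ≠ j → Disjoint (𝒰 i) (𝒰 j)) {f : U → V}
    (hf : Function.Injective f) (hE : ∀ u, E u (f u)) : matchingPoint 𝒰 f ∈ mbSet E 𝒰 := by
  refine ⟨fun q => ?_, ⟨0, by simp [matchingPoint]⟩, fun w => ?_, fun i U' hU' _ => ?_⟩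
  · exact (ite_eq_or_eq _ _ _).symm
  · have hunique : (Finset.univ.filter fun i => w ∈ (𝒰 i).image f).card ≤ 1 := by
      refine Finset.card_le_one.2 fun i hi j hj => by_contra fun hij => ?_
      exact Finset.disjoint_left.1 ((Finset.disjoint_image hf).2 (hdisj i j hij))
        (Finset.mem_filter.1 hi).2 (Finset.mem_filter.1 hj).2
    simpa [matchingPoint, Finset.sum_boole] using hunique
  · have himage : U'.image f ⊆ (neigh E U').filter (· ∈ (𝒰 i).image f) := fun w hw =>
      Finset.mem_filter.2 ⟨image_subset_neigh hE U' hw, Finset.image_subset_image hU' hw⟩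
    calc (U'.card : ℝ) + (matchingPoint 𝒰 f).2 = (U'.image f).card := by
          simp [matchingPoint, Finset.card_image_of_injective U' hf]
      _ ≤ ((neigh E U').filter (· ∈ (𝒰 i).image f)).card := by
          exact_mod_cast Finset.card_le_card himage
      _ = ∑ w ∈ neigh E U', (matchingPoint 𝒰 f).1 (w, i) := (Finset.sum_boole _ _).symm

end MBSet

theorem stmt_3_general {U V : Type*} [Fintype V] {m : ℕ} (hm : 0 < m)
    (E : U → V → Prop) (𝒰 : Fin m → Finset U)
    (hdisj : ∀ i j, i ≠ j → Disjoint (𝒰 i) (𝒰 j)) (v : V)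
    (hmatch : ∃ f : U → V, Function.Injective f ∧ ∀ u : U, E u (f u) ∧ f u ≠ v) :
    (∀ p ∈ convexHull ℝ (mbSet E 𝒰), ∑ i : Fin m, p.1 (v, i) ≤ 1) ∧
    Module.finrank ℝ
        (affineSpan ℝ
          {p ∈ convexHull ℝ (mbSet E 𝒰) | ∑ i : Fin m, p.1 (v, i) = 1}).direction + 1 =
      Module.finrank ℝ (affineSpan ℝ (convexHull ℝ (mbSet E 𝒰))).direction := by
  obtain ⟨f, hf, hE⟩ := hmatch
  have hvalid : ∀ p ∈ mbSet E 𝒰, assignmentSum v p ≤ 1 := fun p hp => hp.2.2.1 v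
  refine ⟨fun p => le_of_mem_convexHull hvalid,
    finrank_direction_face_add_one_of_add_mem (L := assignmentSum v) (e := assignmentVec v ⟨0, hm⟩)
      (fun p hp hne => ?_) ⟨matchingPoint 𝒰 f, ?_, ?_⟩⟩
  · have hv : ∀ j, p.1 (v, j) = 0 :=
      eq_zero_of_sum_ne_one (fun j => hp.1 (v, j)) (hvalid p hp) hne
    exact ⟨add_assignmentVec_mem_mbSet hp hv _,
      by rw [map_add, assignmentSum_assignmentVec, assignmentSum_apply]; simp [hv]⟩
  · exact matchingPoint_mem_mbSet hdisj hf fun u => (hE u).1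
  · simp [assignmentSum_matchingPoint_of_forall_ne 𝒰 fun u => (hE u).2]

/-- **Proposition 1.2.4**: under the hypothesis and assuming a `1`-MCM solution exists
(so `P(G,𝒰)` is full dimensional), for every `v ∈ V` the inequality
`Σ_{i∈M} x_v^i ≤ 1` defines a facet of `P(G,𝒰)`: it is valid, and the set of points of
the polytope satisfying it with equality has affine span of dimension `dim P(G,𝒰) - 1`. -/
theorem stmt_3 {U V : Type*} [Fintype U] [Fintype V] {m : ℕ}
    (E : U → V → Prop) (𝒰 : Fin m → Finset U)
    (h𝒰 : (∀ u : U, ∃ i, u ∈ 𝒰 i) ∧ ∀ i j, i ≠ j → Disjoint (𝒰 i) (𝒰 j))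
    (hyp : ∀ v : V, ∃ f : U → V, Function.Injective f ∧ ∀ u : U, E u (f u) ∧ f u ≠ v)
    (h1 : ∃ 𝒱 : Fin m → Finset V, IsPartitionOn 𝒱 ∧ MCM E 𝒰 𝒱 1)
    (v : V) :
    (∀ p ∈ convexHull ℝ (mbSet E 𝒰), ∑ i : Fin m, p.1 (v, i) ≤ 1) ∧
    Module.finrank ℝ
        (affineSpan ℝ
          {p ∈ convexHull ℝ (mbSet E 𝒰) | ∑ i : Fin m, p.1 (v, i) = 1}).direction + 1 =
      Module.finrank ℝ (affineSpan ℝ (convexHull ℝ (mbSet E 𝒰))).direction := by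
  obtain ⟨_, ⟨hcov, _⟩, _⟩ := h1
  exact stmt_3_general (hcov v).choose.pos E 𝒰 h𝒰.2 v (hyp v)

end
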